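/- (Structure of complete arc-eager transition sequences.) Let t be any complete arc-eager transition sequence for a sentence of length n ≥ 1. Then: (i) t consists of exactly 2n+1 transitions, of which exactly n+1 are pushes (sh or ra) and exactly n are pops (rl or re); (ii) the first transition of t is sh, pushing ROOT (index 0); (iii) each index in {0,…,n} is pushed exactly once, each index in {1,…,n} is popped exactly once, and index 0 is never popped; (iv) every index pushed by sh other than 0 is popped by rl and thereby receives a head strictly to its right, and every index pushed by ra is popped by re and received (at its push) a head strictly to its left; (v) the final arc set A(t) contains exactly n arcs and assigns to each index in {1,…,n} exactly one head. -/

import Mathlib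

/-- A parser configuration: a stack of indices (head of the list = top of stack),
a buffer of indices (head of the list = front of buffer), and a set of arcs
`(h, m)` meaning `h` is the head of modifier `m`. -/
structure Config where
  stack : List ℕ
  buffer : List ℕ
  arcs : Finset (ℕ × ℕ)

/-- Initial configuration for a sentence of length `n`:
empty stack, buffer `[0, 1, …, n]` (ROOT is index 0), empty arc set. -/
def initConfig (n : ℕ) : Config := ⟨[], List.range (n + 1), ∅⟩

/-- Stack-top feature of a configuration: `none` plays the role of the dummy index ⊥
used when the stack is empty. -/
def stackFeat (c : Config) : Option ℕ := c.stack.head?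

/-- Buffer-front feature of a configuration: the end-marker index `n + 1`
when the buffer is empty. -/
def bufFeat (n : ℕ) (c : Config) : ℕ := c.buffer.headD (n + 1)

/-- Arc-eager transition labels. -/
inductive ETrans
  | sh | rl | ra | re
deriving DecidableEq

/-- Single arc-eager transitions between configurations. -/
inductive EStep : Config → ETrans → Config → Prop
  | sh (σ b β A) : EStep ⟨σ, b :: β, A⟩ .sh ⟨b :: σ, β, A⟩
  | rl (s σ b β A) (h : ∀ x, (x, s) ∉ A) :
      EStep ⟨s :: σ, b :: β, A⟩ .rl ⟨σ, b :: β, insert (b, s) A⟩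
  | ra (s σ b β A) :
      EStep ⟨s :: σ, b :: β, A⟩ .ra ⟨b :: s :: σ, β, insert (s, b) A⟩
  | re (s σ β A) (h : ∃ x, (x, s) ∈ A) :
      EStep ⟨s :: σ, β, A⟩ .re ⟨σ, β, A⟩

/-- `ETrace c t c'` holds when `t` is a list of (configuration, transition) pairs,
each transition taken in the recorded configuration, leading from `c` to `c'`. -/
inductive ETrace : Config → List (Config × ETrans) → Config → Prop
  | nil (c) : ETrace c [] c
  | cons {c c' cf : Config} {τ : ETrans} {rest} :
      EStep c τ c' → ETrace c' rest cf → ETrace c ((c, τ) :: rest) cf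

/-- Score of an arc-eager transition sequence under parameterization
`(fsh, fra, frl, fre)`: the sum, over the transitions, of the corresponding
scoring function evaluated at the feature pair of the configuration in which
the transition is taken. -/
def escore (n : ℕ) (fsh fra frl fre : Option ℕ → ℕ → ℝ)
    (t : List (Config × ETrans)) : ℝ :=
  (t.map fun e =>
    (match e.2 with
      | ETrans.sh => fsh
      | ETrans.ra => fra
      | ETrans.rl => frl
      | ETrans.re => fre) (stackFeat e.1) (bufFeat n e.1)).sum

/-- Arc-hybrid transition labels. -/
inductive HTrans
  | sh | rr | rl
deriving DecidableEq

/-- Single arc-hybrid transitions between configurations. -/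
inductive HStep : Config → HTrans → Config → Prop
  | sh (σ b β A) : HStep ⟨σ, b :: β, A⟩ .sh ⟨b :: σ, β, A⟩
  | rr (s0 s1 σ β A) :
      HStep ⟨s0 :: s1 :: σ, β, A⟩ .rr ⟨s1 :: σ, β, insert (s1, s0) A⟩
  | rl (s σ b β A) :
      HStep ⟨s :: σ, b :: β, A⟩ .rl ⟨σ, b :: β, insert (b, s) A⟩

/-- `HTrace c t c'` holds when `t` is a list of (configuration, transition) pairs,
each transition taken in the recorded configuration, leading from `c` to `c'`. -/
inductive HTrace : Config → List (Config × HTrans) → Config → Prop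
  | nil (c) : HTrace c [] c
  | cons {c c' cf : Config} {τ : HTrans} {rest} :
      HStep c τ c' → HTrace c' rest cf → HTrace c ((c, τ) :: rest) cf

/-- Score of an arc-hybrid transition sequence under parameterization
`(gsh, grr, grl)`. -/
def hscore (n : ℕ) (gsh grr grl : Option ℕ → ℕ → ℝ)
    (t : List (Config × HTrans)) : ℝ :=
  (t.map fun e =>
    (match e.2 with
      | HTrans.sh => gsh
      | HTrans.rr => grr
      | HTrans.rl => grl) (stackFeat e.1) (bufFeat n e.1)).sum

/-- An entry is a push (sh or ra). -/
def isPush (e : Config × ETrans) : Bool := e.2 == ETrans.sh || e.2 == ETrans.ra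

/-- An entry is a pop (rl or re). -/
def isPop (e : Config × ETrans) : Bool := e.2 == ETrans.rl || e.2 == ETrans.re

/-- An entry pushes index `i` (push transition taken with `i` at the buffer front). -/
def pushesIdx (i : ℕ) (e : Config × ETrans) : Bool :=
  isPush e && e.1.buffer.head? == some i

/-- An entry pops index `i` (pop transition taken with `i` at the stack top). -/
def popsIdx (i : ℕ) (e : Config × ETrans) : Bool :=
  isPop e && e.1.stack.head? == some i

/-!
Let the *pending* indices of a configuration be its stack read from the bottom, followed by its
buffer. A push leaves this list unchanged and a pop deletes one entry, so it stays strictly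
increasing throughout, and comparing its initial value `[0, …, n]` with its final value `[0]` counts
the pops; the length of the buffer counts the pushes. An index leaves the pending list only once it
has a head, so pending indices and modifiers together always make up `{0, …, n}`, and hence every
index other than `0` ends up with a head. This head is unique, since buffer indices have none and
hence a head is only ever given to an index without one. An index on the stack has a head exactly if
it was pushed by `ra`, and this decides whether `re` or `rl` pops it. Finally, a pending modifier
always has a smaller pending index, so `0`, alone at the end, has no head.
-/

theorem injOn_insert_of_notMem_image {α β : Type*} {f : α → β} {s : Set α} {a : α}
    (hs : Set.InjOn f s) (ha : f a ∉ f '' s) : Set.InjOn f (insert a s) :=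
  (Set.injOn_insert fun h => ha (Set.mem_image_of_mem f h)).2 ⟨hs, ha⟩

theorem count_range_of_lt {n i : ℕ} (hi : i < n) : (List.range n).count i = 1 :=
  List.count_eq_one_of_mem List.nodup_range (List.mem_range.2 hi)

theorem isPop_eq_not_isPush (e : Config × ETrans) : isPop e = !isPush e := by
  rcases e with ⟨c, _ | _ | _ | _⟩ <;> rfl

theorem length_eq_countP_isPush_add_countP_isPop (t : List (Config × ETrans)) :
    t.length = t.countP isPush + t.countP isPop := by
  rw [List.length_eq_countP_add_countP isPush]
  simp [funext isPop_eq_not_isPush]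

namespace Config

/-- The indices not yet popped, in the order in which they occur in the sentence: the stack from
bottom to top, then the buffer. -/
def pending (c : Config) : List ℕ := c.stack.reverse ++ c.buffer

/-- The indices that have received a head. -/
def modifiers (c : Config) : Finset ℕ := c.arcs.image Prod.snd

variable {c : Config} {i j : ℕ}

theorem mem_pending : i ∈ c.pending ↔ i ∈ c.stack ∨ i ∈ c.buffer := by
  simp [pending]

theorem mem_modifiers : i ∈ c.modifiers ↔ ∃ h, (h, i) ∈ c.arcs := by
  simp [modifiers]

theorem mem_modifiers_mk_insert {σ β : List ℕ} {A : Finset (ℕ × ℕ)} {h m : ℕ} :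
    i ∈ modifiers ⟨σ, β, insert (h, m) A⟩ ↔ i = m ∨ i ∈ modifiers ⟨σ, β, A⟩ := by
  rw [modifiers, Finset.image_insert, Finset.mem_insert, modifiers]

theorem pending_mk_push (σ β : List ℕ) (A B : Finset (ℕ × ℕ)) (b : ℕ) :
    pending ⟨b :: σ, β, B⟩ = pending ⟨σ, b :: β, A⟩ := by
  simp [pending]

/-- The invariant of the arc-eager system: what holds in every configuration reachable from an
initial one, for any sentence length. The last field keeps the root, the least index of all, from
acquiring a head while it is pending. -/
structure WellFormed (c : Config) : Prop where
  pending_sortedLT : c.pending.SortedLT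
  notMem_modifiers_of_mem_buffer : ∀ b ∈ c.buffer, b ∉ c.modifiers
  injOn_snd_arcs : Set.InjOn Prod.snd (c.arcs : Set (ℕ × ℕ))
  exists_pending_lt : ∀ m ∈ c.modifiers, m ∈ c.pending → ∃ j ∈ c.pending, j < m

namespace WellFormed

theorem stack_lt_buffer (hc : c.WellFormed) (hi : i ∈ c.stack) (hj : j ∈ c.buffer) : i < j :=
  (List.pairwise_append.1 hc.pending_sortedLT.pairwise).2.2 i (List.mem_reverse.2 hi) j hj

theorem notMem_buffer (hc : c.WellFormed) (hi : i ∈ c.stack) : i ∉ c.buffer :=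
  fun hb => (hc.stack_lt_buffer hi hb).false

theorem lt_top_of_mem_tail {s : ℕ} {σ β : List ℕ} {A : Finset (ℕ × ℕ)}
    (hc : WellFormed ⟨s :: σ, β, A⟩) (hi : i ∈ σ) : i < s := by
  have hstack := (List.pairwise_append.1 hc.pending_sortedLT.pairwise).1
  exact (List.pairwise_cons.1 (List.pairwise_reverse.1 hstack)).1 i hi

theorem top_notMem_pending_mk_tail {s : ℕ} {σ β : List ℕ} {A : Finset (ℕ × ℕ)}
    (hc : WellFormed ⟨s :: σ, β, A⟩) (B : Finset (ℕ × ℕ)) : s ∉ pending ⟨σ, β, B⟩ := by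
  rw [mem_pending, not_or]
  exact ⟨fun hs => (hc.lt_top_of_mem_tail hs).false, hc.notMem_buffer List.mem_cons_self⟩

theorem exists_pending_mk_tail_lt {s m : ℕ} {σ β : List ℕ} {A B : Finset (ℕ × ℕ)}
    (hc : WellFormed ⟨s :: σ, β, A⟩) (hm : m ∈ modifiers ⟨s :: σ, β, A⟩)
    (hpending : m ∈ pending ⟨σ, β, B⟩) : ∃ j ∈ pending ⟨σ, β, B⟩, j < m := by
  have hmσ : m ∈ σ := (mem_pending.1 hpending).resolve_right fun hmβ =>
    hc.notMem_modifiers_of_mem_buffer m hmβ hm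
  obtain ⟨j, hj, hjm⟩ :=
    hc.exists_pending_lt m hm (mem_pending.2 (.inl (List.mem_cons_of_mem s hmσ)))
  have hjs : j ≠ s := (hjm.trans (hc.lt_top_of_mem_tail hmσ)).ne
  refine ⟨j, ?_, hjm⟩
  simpa [mem_pending, hjs] using hj

theorem top_lt_front (hc : c.WellFormed) (hi : c.stack.head? = some i)
    (hj : c.buffer.head? = some j) : i < j :=
  hc.stack_lt_buffer (List.mem_of_head? hi) (List.mem_of_head? hj)

theorem card_modifiers (hc : c.WellFormed) : c.modifiers.card = c.arcs.card :=
  Finset.card_image_of_injOn hc.injOn_snd_arcs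

theorem existsUnique_head (hc : c.WellFormed) (hi : i ∈ c.modifiers) : ∃! h, (h, i) ∈ c.arcs := by
  obtain ⟨h, hh⟩ := mem_modifiers.1 hi
  exact ⟨h, hh, fun h' hh' => congrArg Prod.fst (hc.injOn_snd_arcs hh' hh rfl)⟩

end WellFormed

end Config

theorem pending_initConfig (n : ℕ) : (initConfig n).pending = List.range (n + 1) := rfl

theorem modifiers_initConfig (n : ℕ) : (initConfig n).modifiers = ∅ := rfl

theorem wellFormed_initConfig (n : ℕ) : (initConfig n).WellFormed where
  pending_sortedLT := List.sortedLT_range (n + 1)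
  notMem_modifiers_of_mem_buffer := by simp [modifiers_initConfig]
  injOn_snd_arcs := by simp [initConfig]
  exists_pending_lt := by simp [modifiers_initConfig]

namespace EStep

open Config

variable {c c' : Config} {τ : ETrans} {i : ℕ}

theorem eq_sh_of_stack_eq_nil (h : EStep c τ c') (hc : c.stack = []) : τ = .sh := by
  cases h <;> simp_all

theorem exists_head?_stack_of_ra (h : EStep c .ra c') : ∃ k, c.stack.head? = some k := by
  cases h
  exact ⟨_, rfl⟩

theorem stack_eq_cons_of_isPush (h : EStep c τ c') (hpush : isPush (c, τ))
    (hi : c.buffer.head? = some i) : c'.stack = i :: c.stack := by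
  cases h <;> simp_all [isPush]

theorem pending_sublist (h : EStep c τ c') : c'.pending.Sublist c.pending := by
  cases h <;> simp [pending]

theorem pending_toFinset_union_modifiers (h : EStep c τ c') :
    c'.pending.toFinset ∪ c'.modifiers = c.pending.toFinset ∪ c.modifiers := by
  ext i
  simp only [Finset.mem_union, List.mem_toFinset, mem_pending]
  cases h with
  | re s σ β A hs =>
    have hs : s ∈ modifiers ⟨s :: σ, β, A⟩ := mem_modifiers.2 hs
    simp only [modifiers] at *
    grind
  | _ =>
    simp only [modifiers, Finset.image_insert]
    grind

theorem notMem_modifiers_of_mem_buffer (h : EStep c τ c') (hc : c.WellFormed) :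
    ∀ b ∈ c'.buffer, b ∉ c'.modifiers := by
  have hbuffer := hc.notMem_modifiers_of_mem_buffer
  cases h with
  | sh => exact fun i hi => hbuffer i (List.mem_cons_of_mem _ hi)
  | re => exact hbuffer
  | rl =>
    intro i hi
    rw [mem_modifiers_mk_insert, not_or]
    exact ⟨(hc.stack_lt_buffer List.mem_cons_self hi).ne', hbuffer i hi⟩
  | ra =>
    intro i hi
    have hnodup := (List.nodup_append.1 hc.pending_sortedLT.nodup).2.1
    rw [mem_modifiers_mk_insert, not_or]
    exact ⟨ne_of_mem_of_not_mem hi (List.nodup_cons.1 hnodup).1,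
      hbuffer i (List.mem_cons_of_mem _ hi)⟩

theorem injOn_snd_arcs (h : EStep c τ c') (hc : c.WellFormed) :
    Set.InjOn Prod.snd (c'.arcs : Set (ℕ × ℕ)) := by
  have hinj := hc.injOn_snd_arcs
  cases h with
  | sh | re => exact hinj
  | rl s σ b β A hs =>
    rw [Finset.coe_insert]
    exact injOn_insert_of_notMem_image hinj (by simpa using hs)
  | ra s σ b β A =>
    have hb : b ∉ A.image Prod.snd := hc.notMem_modifiers_of_mem_buffer b List.mem_cons_self
    rw [Finset.coe_insert]
    exact injOn_insert_of_notMem_image hinj (by simpa using hb)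

theorem exists_pending_lt (h : EStep c τ c') (hc : c.WellFormed) :
    ∀ m ∈ c'.modifiers, m ∈ c'.pending → ∃ j ∈ c'.pending, j < m := by
  intro m hm hpending
  cases h with
  | sh σ b β A =>
    rw [pending_mk_push (A := A)] at hpending ⊢
    exact hc.exists_pending_lt m hm hpending
  | re => exact hc.exists_pending_mk_tail_lt hm hpending
  | rl s σ b β A =>
    rw [mem_modifiers_mk_insert] at hm
    have hms : m ≠ s := ne_of_mem_of_not_mem hpending (hc.top_notMem_pending_mk_tail _)
    exact hc.exists_pending_mk_tail_lt (hm.resolve_left hms) hpending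
  | ra s σ b β A =>
    rw [mem_modifiers_mk_insert] at hm
    rw [pending_mk_push (A := A)] at hpending ⊢
    rcases hm with rfl | hm
    · exact ⟨s, mem_pending.2 (.inl List.mem_cons_self),
        hc.stack_lt_buffer List.mem_cons_self List.mem_cons_self⟩
    · exact hc.exists_pending_lt m hm hpending

theorem wellFormed (h : EStep c τ c') (hc : c.WellFormed) : c'.WellFormed where
  pending_sortedLT := (hc.pending_sortedLT.pairwise.sublist h.pending_sublist).sortedLT
  notMem_modifiers_of_mem_buffer := h.notMem_modifiers_of_mem_buffer hc
  injOn_snd_arcs := h.injOn_snd_arcs hc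
  exists_pending_lt := h.exists_pending_lt hc

theorem mem_modifiers_iff_of_isPush (h : EStep c τ c') (hc : c.WellFormed)
    (hpush : isPush (c, τ)) (hi : c.buffer.head? = some i) : i ∈ c'.modifiers ↔ τ = .ra := by
  have hmod := hc.notMem_modifiers_of_mem_buffer i (List.mem_of_head? hi)
  cases h with
  | sh => exact iff_of_false hmod ETrans.noConfusion
  | ra => exact iff_of_true (mem_modifiers_mk_insert.2 (.inl (Option.some.inj hi).symm)) rfl
  | rl | re => simp [isPush] at hpush

theorem popped_or_mem_stack (h : EStep c τ c') (hstack : i ∈ c.stack) (hbuf : i ∉ c.buffer) :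
    (τ = (if i ∈ c.modifiers then .re else .rl) ∧ c.stack.head? = some i) ∨
      (i ∈ c'.stack ∧ i ∉ c'.buffer ∧ (i ∈ c'.modifiers ↔ i ∈ c.modifiers)) := by
  cases h with
  | sh σ b β A =>
    exact .inr ⟨List.mem_cons_of_mem b hstack, List.not_mem_of_not_mem_cons hbuf, .rfl⟩
  | ra s σ b β A =>
    have hmod : i ∈ modifiers ⟨b :: s :: σ, β, insert (s, b) A⟩ ↔
        i ∈ modifiers ⟨s :: σ, b :: β, A⟩ :=
      mem_modifiers_mk_insert.trans (or_iff_right (List.ne_of_not_mem_cons hbuf))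
    exact .inr ⟨List.mem_cons_of_mem b hstack, List.not_mem_of_not_mem_cons hbuf, hmod⟩
  | rl s σ b β A hs =>
    by_cases his : i = s
    · subst his
      have hi : i ∉ modifiers ⟨i :: σ, b :: β, A⟩ := fun hi => (mem_modifiers.1 hi).elim hs
      exact .inl ⟨(if_neg hi).symm, rfl⟩
    · have hmod : i ∈ modifiers ⟨σ, b :: β, insert (b, s) A⟩ ↔
          i ∈ modifiers ⟨s :: σ, b :: β, A⟩ :=
        mem_modifiers_mk_insert.trans (or_iff_right his)
      exact .inr ⟨List.mem_of_ne_of_mem his hstack, hbuf, hmod⟩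
  | re s σ β A hs =>
    by_cases his : i = s
    · subst his
      exact .inl ⟨(if_pos (mem_modifiers.2 hs)).symm, rfl⟩
    · exact .inr ⟨List.mem_of_ne_of_mem his hstack, hbuf, .rfl⟩

end EStep

namespace ETrace

open Config

variable {c cf : Config} {t : List (Config × ETrans)} {e : Config × ETrans} {i j : ℕ}

theorem exists_cons_of_ne (ht : ETrace c t cf) (hne : c ≠ cf) :
    ∃ τ c' rest, t = (c, τ) :: rest ∧ EStep c τ c' := by
  cases ht with
  | nil => exact absurd rfl hne
  | cons hs _ => exact ⟨_, _, _, rfl, hs⟩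

theorem exists_split_of_mem (ht : ETrace c t cf) (he : e ∈ t) :
    ∃ t₁ c' t₂, t = t₁ ++ e :: t₂ ∧ ETrace c t₁ e.1 ∧ EStep e.1 e.2 c' ∧ ETrace c' t₂ cf := by
  induction ht with
  | nil => simp at he
  | @cons c c' cf τ rest hs ht ih =>
    rcases List.mem_cons.1 he with rfl | he
    · exact ⟨[], c', rest, rfl, .nil c, hs, ht⟩
    · obtain ⟨t₁, d, t₂, rfl, ht₁, hstep, ht₂⟩ := ih he
      exact ⟨(c, τ) :: t₁, d, t₂, rfl, .cons hs ht₁, hstep, ht₂⟩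

theorem wellFormed (ht : ETrace c t cf) (hc : c.WellFormed) : cf.WellFormed := by
  induction ht with
  | nil => exact hc
  | cons hs _ ih => exact ih (hs.wellFormed hc)

theorem pending_toFinset_union_modifiers (ht : ETrace c t cf) :
    cf.pending.toFinset ∪ cf.modifiers = c.pending.toFinset ∪ c.modifiers := by
  induction ht with
  | nil => rfl
  | cons hs _ ih => exact ih.trans hs.pending_toFinset_union_modifiers

theorem countP_add_eq_of_step {p : Config × ETrans → Bool} {f : Config → ℕ}
    (hf : ∀ {c τ c'}, EStep c τ c' → f c = f c' + if p (c, τ) then 1 else 0)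
    (ht : ETrace c t cf) : t.countP p + f cf = f c := by
  induction ht with
  | nil => simp
  | cons hs _ ih => rw [List.countP_cons, hf hs, ← ih, Nat.add_right_comm]

theorem countP_isPush_add (ht : ETrace c t cf) :
    t.countP isPush + cf.buffer.length = c.buffer.length :=
  ht.countP_add_eq_of_step (f := fun c => c.buffer.length) fun hs => by cases hs <;> simp [isPush]

theorem countP_isPop_add (ht : ETrace c t cf) :
    t.countP isPop + cf.pending.length = c.pending.length :=
  ht.countP_add_eq_of_step (f := fun c => c.pending.length) fun hs => by
    cases hs <;> grind [isPop, pending]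

theorem countP_pushesIdx_add (ht : ETrace c t cf) (i : ℕ) :
    t.countP (pushesIdx i) + cf.buffer.count i = c.buffer.count i :=
  ht.countP_add_eq_of_step (f := fun c => c.buffer.count i) fun hs => by
    cases hs <;> simp [pushesIdx, isPush, List.count_cons]

theorem countP_popsIdx_add (ht : ETrace c t cf) (i : ℕ) :
    t.countP (popsIdx i) + cf.pending.count i = c.pending.count i :=
  ht.countP_add_eq_of_step (f := fun c => c.pending.count i) fun hs => by
    cases hs <;> grind [popsIdx, isPop, pending]

theorem exists_pop (ht : ETrace c t cf) (hstack : i ∈ c.stack) (hbuf : i ∉ c.buffer)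
    (hcf : i ∉ cf.stack) :
    ∃ e ∈ t, e.2 = (if i ∈ c.modifiers then .re else .rl) ∧ e.1.stack.head? = some i := by
  induction ht with
  | nil => exact absurd hstack hcf
  | cons hs _ ih =>
    rcases hs.popped_or_mem_stack hstack hbuf with hpop | ⟨hstack', hbuf', hmod⟩
    · exact ⟨_, List.mem_cons_self, hpop⟩
    · obtain ⟨e, he, hpop⟩ := ih hstack' hbuf' hcf
      exact ⟨e, List.mem_cons_of_mem _ he, by simpa only [hmod] using hpop⟩

theorem top_lt_front (ht : ETrace c t cf) (hc : c.WellFormed) (he : e ∈ t)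
    (hi : e.1.stack.head? = some i) (hj : e.1.buffer.head? = some j) : i < j := by
  obtain ⟨t₁, c', t₂, -, ht₁, -, -⟩ := ht.exists_split_of_mem he
  exact (ht₁.wellFormed hc).top_lt_front hi hj

theorem exists_top_lt_of_ra (ht : ETrace c t cf) (hc : c.WellFormed) (he : e ∈ t)
    (hra : e.2 = .ra) (hi : e.1.buffer.head? = some i) :
    ∃ k, e.1.stack.head? = some k ∧ k < i := by
  obtain ⟨t₁, c', t₂, -, -, hs, -⟩ := ht.exists_split_of_mem he
  obtain ⟨k, hk⟩ := (hra ▸ hs).exists_head?_stack_of_ra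
  exact ⟨k, hk, ht.top_lt_front hc he hk hi⟩

theorem exists_pop_of_isPush (ht : ETrace c t cf) (hc : c.WellFormed) (he : e ∈ t)
    (hpush : isPush e) (hi : e.1.buffer.head? = some i) (hcf : i ∉ cf.stack) :
    ∃ e' ∈ t, e'.2 = (if e.2 = .ra then .re else .rl) ∧ e'.1.stack.head? = some i := by
  obtain ⟨t₁, c', t₂, rfl, ht₁, hs, ht₂⟩ := ht.exists_split_of_mem he
  have hwf := ht₁.wellFormed hc
  have hstack : i ∈ c'.stack := hs.stack_eq_cons_of_isPush hpush hi ▸ List.mem_cons_self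
  have hbuf : i ∉ c'.buffer := (hs.wellFormed hwf).notMem_buffer hstack
  obtain ⟨e', he', hpop, htop⟩ := ht₂.exists_pop hstack hbuf hcf
  simp only [hs.mem_modifiers_iff_of_isPush hwf hpush hi] at hpop
  exact ⟨e', List.mem_append_right t₁ (List.mem_cons_of_mem e he'), hpop, htop⟩

section Complete

variable {n : ℕ} {A : Finset (ℕ × ℕ)}

theorem countP_isPush_of_complete (ht : ETrace (initConfig n) t ⟨[0], [], A⟩) :
    t.countP isPush = n + 1 := by
  simpa [initConfig] using ht.countP_isPush_add

theorem countP_isPop_of_complete (ht : ETrace (initConfig n) t ⟨[0], [], A⟩) :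
    t.countP isPop = n := by
  simpa [pending, initConfig] using ht.countP_isPop_add

theorem countP_pushesIdx_of_complete (ht : ETrace (initConfig n) t ⟨[0], [], A⟩)
    (hi : i ≤ n) : t.countP (pushesIdx i) = 1 := by
  simpa [initConfig, count_range_of_lt (Nat.lt_succ_of_le hi)] using ht.countP_pushesIdx_add i

theorem countP_popsIdx_of_complete (ht : ETrace (initConfig n) t ⟨[0], [], A⟩)
    (hi : i ≤ n) : t.countP (popsIdx i) = if i = 0 then 0 else 1 := by
  have hcount := ht.countP_popsIdx_add i
  rw [pending_initConfig, count_range_of_lt (Nat.lt_succ_of_le hi)] at hcount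
  simp only [pending, List.reverse_singleton, List.append_nil, List.count_singleton,
    beq_iff_eq] at hcount
  grind

theorem exists_eq_sh_cons_of_complete (ht : ETrace (initConfig n) t ⟨[0], [], A⟩) :
    ∃ rest, t = (initConfig n, .sh) :: rest := by
  obtain ⟨τ, c', rest, rfl, hs⟩ := ht.exists_cons_of_ne (by simp [initConfig])
  exact ⟨rest, by rw [hs.eq_sh_of_stack_eq_nil rfl]⟩

theorem modifiers_of_complete (ht : ETrace (initConfig n) t ⟨[0], [], A⟩) :
    modifiers ⟨[0], [], A⟩ = Finset.Icc 1 n := by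
  have hroot : 0 ∉ modifiers ⟨[0], [], A⟩ := fun h0 => by
    obtain ⟨j, -, hj⟩ := (ht.wellFormed (wellFormed_initConfig n)).exists_pending_lt 0 h0
      (mem_pending.2 (.inl List.mem_cons_self))
    exact Nat.not_lt_zero j hj
  have hunion := ht.pending_toFinset_union_modifiers
  rw [pending_initConfig, modifiers_initConfig, Finset.union_empty] at hunion
  ext i
  have hi : i = 0 ∨ i ∈ modifiers ⟨[0], [], A⟩ ↔ i < n + 1 := by
    simpa [pending] using Finset.ext_iff.1 hunion i
  rw [Finset.mem_Icc]
  rcases eq_or_ne i 0 with rfl | h0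
  · simp [hroot]
  · rw [← or_iff_right (b := i ∈ _) h0, hi]
    omega

end Complete

end ETrace

/-- **Structure of complete arc-eager transition sequences.** -/
theorem arc_eager_structure
    (n : ℕ) (hn : 1 ≤ n)
    (t : List (Config × ETrans)) (A : Finset (ℕ × ℕ))
    (ht : ETrace (initConfig n) t ⟨[0], [], A⟩) :
    -- (i) exactly 2n+1 transitions: n+1 pushes and n pops
    (t.length = 2 * n + 1 ∧ t.countP isPush = n + 1 ∧ t.countP isPop = n) ∧
    -- (ii) the first transition is sh, taken in the initial configuration
    -- (whose buffer front is ROOT, index 0)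
    (∃ rest, t = (initConfig n, ETrans.sh) :: rest) ∧
    -- (iii) each index in {0,…,n} is pushed exactly once; each index in
    -- {1,…,n} is popped exactly once; index 0 is never popped
    ((∀ i, i ≤ n → t.countP (pushesIdx i) = 1) ∧
     (∀ i, 1 ≤ i → i ≤ n → t.countP (popsIdx i) = 1) ∧
     t.countP (popsIdx 0) = 0) ∧
    -- (iv) sh-pushed indices other than 0 are popped by rl, receiving a head
    -- strictly to their right; ra-pushed indices are popped by re, receiving
    -- (at their push) a head strictly to their left
    ((∀ e ∈ t, e.2 = ETrans.sh → ∀ i, e.1.buffer.head? = some i → i ≠ 0 →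
        ∃ e' ∈ t, e'.2 = ETrans.rl ∧ e'.1.stack.head? = some i) ∧
     (∀ e ∈ t, e.2 = ETrans.rl → ∀ i j, e.1.stack.head? = some i →
        e.1.buffer.head? = some j → i < j) ∧
     (∀ e ∈ t, e.2 = ETrans.ra → ∀ i, e.1.buffer.head? = some i →
        ∃ e' ∈ t, e'.2 = ETrans.re ∧ e'.1.stack.head? = some i) ∧
     (∀ e ∈ t, e.2 = ETrans.ra → ∀ k i, e.1.stack.head? = some k →
        e.1.buffer.head? = some i → k < i)) ∧
    -- (v) the final arc set has exactly n arcs and assigns each index in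
    -- {1,…,n} exactly one head
    (A.card = n ∧ ∀ m, 1 ≤ m → m ≤ n → ∃! h, (h, m) ∈ A) := by
  have hwf := wellFormed_initConfig n
  have hmod := ht.modifiers_of_complete
  refine ⟨⟨?_, ht.countP_isPush_of_complete, ht.countP_isPop_of_complete⟩,
    ht.exists_eq_sh_cons_of_complete,
    ⟨fun i hi => ht.countP_pushesIdx_of_complete hi, fun i h1 hi => ?_, ?_⟩,
    ⟨fun e he hsh i hi h0 => ?_, fun e he _ i j hi hj => ht.top_lt_front hwf he hi hj,
      fun e he hra i hi => ?_, fun e he _ k i hk hi => ht.top_lt_front hwf he hk hi⟩,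
    ?_, fun m h1 hm => ?_⟩
  · rw [length_eq_countP_isPush_add_countP_isPop, ht.countP_isPush_of_complete,
      ht.countP_isPop_of_complete]
    ring
  · rw [ht.countP_popsIdx_of_complete hi, if_neg (Nat.one_le_iff_ne_zero.1 h1)]
  · rw [ht.countP_popsIdx_of_complete n.zero_le, if_pos rfl]
  · simpa [hsh] using
      ht.exists_pop_of_isPush hwf he (by simp [isPush, hsh]) hi (by simpa using h0)
  · obtain ⟨k, -, hk⟩ := ht.exists_top_lt_of_ra hwf he hra hi
    simpa [hra] using ht.exists_pop_of_isPush hwf he (by simp [isPush, hra]) hi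
      (by simpa using Nat.ne_zero_of_lt hk)
  · simpa [hmod] using (ht.wellFormed hwf).card_modifiers.symm
  · exact (ht.wellFormed hwf).existsUnique_head (hmod ▸ Finset.mem_Icc.2 ⟨h1, hm⟩)
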